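/- arXiv:1106.2213 — 3 statements merged into one kernel-verified Lean document; each statement's English description precedes it below -/
import Mathlib

section
/- Let ν be a probability measure on [0,1] and let σ be the associated geodesic mean, A σ B := ∫_0^1 A #_α B dν(α). Then for all positive definite n×n complex matrices A, B and every k = 1,…,n, (∏_{j=n+1-k}^n μ_j(A σ B))^{1/k} ≥ ∫_0^1 a^{1-α} b^{α} dν(α), where a := (∏_{j=n+1-k}^n μ_j(A))^{1/k} and b := (∏_{j=n+1-k}^n μ_j(B))^{1/k}. -/
open scoped ComplexOrder

section Defs

variable {n : ℕ}

/-- eigenvalues of a Hermitian matrix listed in increasing order -/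
noncomputable def eigUp {A : Matrix (Fin n) (Fin n) ℂ} (hA : A.IsHermitian) : Fin n → ℝ :=
  fun i => hA.eigenvalues (Tuple.sort hA.eigenvalues i)

/-- eigenvalues of a Hermitian matrix listed in decreasing order: `eigDown hA i = μ_{i+1}(A)` -/
noncomputable def eigDown {A : Matrix (Fin n) (Fin n) ℂ} (hA : A.IsHermitian) : Fin n → ℝ :=
  fun i => eigUp hA i.rev

/-- the product of the `k` smallest eigenvalues, `∏_{j=1}^k μ_{n+1-j}(A)` -/
noncomputable def prodSmall (A : Matrix (Fin n) (Fin n) ℂ) (k : ℕ) : ℝ :=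
  if hA : A.IsHermitian then
    ∏ i ∈ Finset.univ.filter (fun i : Fin n => (i : ℕ) < k), eigUp hA i
  else 0

/-- the product of the `k` largest eigenvalues, `∏_{j=1}^k μ_j(A)` -/
noncomputable def prodLarge (A : Matrix (Fin n) (Fin n) ℂ) (k : ℕ) : ℝ :=
  if hA : A.IsHermitian then
    ∏ i ∈ Finset.univ.filter (fun i : Fin n => (i : ℕ) < k), eigDown hA i
  else 0

/-- the sum of the `k` smallest eigenvalues, `∑_{j=1}^k μ_{n+1-j}(A)` -/
noncomputable def sumSmall (A : Matrix (Fin n) (Fin n) ℂ) (k : ℕ) : ℝ :=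
  if hA : A.IsHermitian then
    ∑ i ∈ Finset.univ.filter (fun i : Fin n => (i : ℕ) < k), eigUp hA i
  else 0

/-- A doubly concave function on an interval `Ω ⊆ [0,∞)`. -/
structure DoublyConcaveOn (f : ℝ → ℝ) (Ω : Set ℝ) : Prop where
  subset_Ici : Ω ⊆ Set.Ici (0 : ℝ)
  nonneg : ∀ x ∈ Ω, 0 ≤ f x
  continuousOn : ContinuousOn f Ω
  concaveOn : ConcaveOn ℝ Ω f
  geomConcave : ∀ x ∈ Ω, ∀ y ∈ Ω, Real.sqrt (f x * f y) ≤ f (Real.sqrt (x * y))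

/-- `𝔼_p(Z) := (𝔼(Z^p))^{1/p}` -/
noncomputable def Ep {n m : ℕ} (E : Matrix (Fin n) (Fin n) ℂ →ₗ[ℂ] Matrix (Fin m) (Fin m) ℂ)
    (p : ℝ) (Z : Matrix (Fin n) (Fin n) ℂ) : Matrix (Fin m) (Fin m) ℂ :=
  cfc (fun x : ℝ => x ^ (1 / p)) (E (cfc (fun x : ℝ => x ^ p) Z))

/-- the power `p`-mean `A β_p B := ((A^p + B^p)/2)^{1/p}` -/
noncomputable def betaP (p : ℝ) (A B : Matrix (Fin n) (Fin n) ℂ) : Matrix (Fin n) (Fin n) ℂ :=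
  cfc (fun x : ℝ => x ^ (1 / p))
    ((2 : ℂ)⁻¹ • (cfc (fun x : ℝ => x ^ p) A + cfc (fun x : ℝ => x ^ p) B))

noncomputable def sqrtM (A : Matrix (Fin n) (Fin n) ℂ) : Matrix (Fin n) (Fin n) ℂ :=
  cfc Real.sqrt A

noncomputable def invSqrtM (A : Matrix (Fin n) (Fin n) ℂ) : Matrix (Fin n) (Fin n) ℂ :=
  cfc (fun x : ℝ => (Real.sqrt x)⁻¹) A

/-- operator mean with representing function `h`: `A σ B = A^{1/2} h(A^{-1/2} B A^{-1/2}) A^{1/2}` -/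
noncomputable def opMean (h : ℝ → ℝ) (A B : Matrix (Fin n) (Fin n) ℂ) :
    Matrix (Fin n) (Fin n) ℂ :=
  sqrtM A * cfc h (invSqrtM A * B * invSqrtM A) * sqrtM A

/-- the weighted geometric mean `A #_α B` -/
noncomputable def sharp (α : ℝ) (A B : Matrix (Fin n) (Fin n) ℂ) : Matrix (Fin n) (Fin n) ℂ :=
  sqrtM A * cfc (fun x : ℝ => x ^ α) (invSqrtM A * B * invSqrtM A) * sqrtM A

/-- the (real) determinant of a Hermitian matrix -/
noncomputable def rdet (A : Matrix (Fin n) (Fin n) ℂ) : ℝ := (A.det).re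

open Classical in
/-- the derived anti-norm `‖A‖_! = ‖A^{-p}‖^{-1/p}` for invertible positive `A`, `0` otherwise. -/
noncomputable def derivedAntiNorm (N : Matrix (Fin n) (Fin n) ℂ → ℝ) (p : ℝ)
    (A : Matrix (Fin n) (Fin n) ℂ) : ℝ :=
  if IsUnit A.det then (N (cfc (fun x : ℝ => x ^ (-p)) A)) ^ (-(1 / p)) else 0

end Defs

attribute [local instance] Matrix.normedAddCommGroup Matrix.normedSpace

/-- geodesic mean associated to a probability measure on `[0,1]` -/
noncomputable def gmean {n : ℕ} (ν : MeasureTheory.Measure ℝ) (A B : Matrix (Fin n) (Fin n) ℂ) :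
    Matrix (Fin n) (Fin n) ℂ :=
  ∫ α, sharp α A B ∂ν

/-!
For an `n × k` matrix `V`, the Cauchy–Binet formula and Hölder's inequality show that
`det (Vᴴ (A #_t B)⁻¹ V)` is log-convex in `t`. Taking for `V` the eigenvectors of `A #_t B` that
belong to its `k` smallest eigenvalues, one finds that the product of the `k` smallest eigenvalues
of `A #_t B` dominates the weighted geometric mean of those of `A` and `B`. On the other hand, by
AM–GM the `k`-th root of this product is an infimum of linear functionals, attained at every
positive definite matrix. A functional supporting it at `A σ B` commutes with the integral, and it
bounds the `k`-th root at each `A #_t B`: this is Jensen's inequality.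
-/

theorem sum_rpow_mul_le_rpow_mul_rpow {ι : Type*} (s : Finset ι) {w x : ι → ℝ}
    (hw : ∀ i, 0 ≤ w i) (hx : ∀ i, 0 ≤ x i) {t : ℝ} (ht : t ∈ Set.Icc (0 : ℝ) 1) :
    ∑ i ∈ s, x i ^ t * w i ≤ (∑ i ∈ s, w i) ^ (1 - t) * (∑ i ∈ s, x i * w i) ^ t := by
  obtain rfl | ht0 := ht.1.eq_or_lt
  · simp
  · have holder := Real.inner_le_weight_mul_Lp_of_nonneg s ((one_le_inv₀ ht0).2 ht.2) w
      (fun i => x i ^ t) hw fun i => Real.rpow_nonneg (hx i) t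
    simpa only [inv_inv, Real.rpow_rpow_inv (hx _) ht0.ne', mul_comm (w _)] using holder

section CompressionDeterminants

open Matrix

/-- A form of the **Cauchy–Binet formula**, summing over all maps instead of over subsets. -/
theorem factorial_mul_det_mul {m n R : Type*} [Fintype m] [DecidableEq m] [Fintype n] [CommRing R]
    (M : Matrix m n R) (N : Matrix n m R) :
    ((Fintype.card m).factorial : R) * (M * N).det =
      ∑ f : m → n, (M.submatrix id f).det * (N.submatrix f id).det := by
  classical
  have expand : (M * N).det = ∑ f : m → n, (M.submatrix id f).det * ∏ i, N (f i) i := by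
    simp only [det_apply', mul_apply, Finset.prod_univ_sum, Finset.mul_sum,
      Fintype.piFinset_univ, Finset.sum_mul]
    rw [Finset.sum_comm]
    simp [Finset.prod_mul_distrib, mul_assoc]
  have reindex (τ : Equiv.Perm m) : (M * N).det =
      ∑ f : m → n, (M.submatrix id f).det * (Equiv.Perm.sign τ * ∏ i, N (f (τ i)) i) := by
    have det_comp (f : m → n) : (M.submatrix id (f ∘ τ)).det =
        Equiv.Perm.sign τ * (M.submatrix id f).det := det_permute' τ (M.submatrix id f)
    calc
      (M * N).det = ∑ f : m → n, (M.submatrix id (f ∘ τ)).det * ∏ i, N (f (τ i)) i :=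
        expand.trans (Equiv.sum_comp (τ.symm.arrowCongr (Equiv.refl n)) _).symm
      _ = _ := by simp only [det_comp, mul_left_comm, mul_assoc]
  calc
    _ = ∑ _τ : Equiv.Perm m, (M * N).det := by simp [Fintype.card_perm]
    _ = ∑ τ : Equiv.Perm m, ∑ f : m → n,
        (M.submatrix id f).det * (Equiv.Perm.sign τ * ∏ i, N (f (τ i)) i) :=
      Finset.sum_congr rfl fun τ _ => reindex τ
    _ = _ := by
      rw [Finset.sum_comm]
      simp only [← Finset.mul_sum]
      simp [det_apply']

variable {m n 𝕜 : Type*} [RCLike 𝕜] [Fintype m] [Fintype n]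

/-- The trace of the compression `Vᴴ X V` of `X` along the columns of `V`, as a real-linear function
of `X`; only its real part is kept. -/
noncomputable def compressionTrace (V : Matrix n m 𝕜) : Matrix n n 𝕜 →ₗ[ℝ] ℝ where
  toFun X := RCLike.re (Vᴴ * X * V).trace
  map_add' X Y := by simp [Matrix.mul_add, Matrix.add_mul]
  map_smul' c X := by simp [RCLike.smul_re]

variable [DecidableEq m]

/-- The determinant of the compression `Vᴴ A V` of `A` along the columns of `V`. Only its real part
is kept, since it is real for Hermitian `A`. -/
noncomputable def compressionDet (A : Matrix n n 𝕜) (V : Matrix n m 𝕜) : ℝ :=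
  RCLike.re (Vᴴ * A * V).det

theorem compressionDet_conjTranspose_mul_mul_same (A S : Matrix n n 𝕜) (V : Matrix n m 𝕜) :
    compressionDet (Sᴴ * A * S) V = compressionDet A (S * V) := by
  simp only [compressionDet, conjTranspose_mul, Matrix.mul_assoc]

theorem compressionDet_nonneg {A : Matrix n n 𝕜} (hA : A.PosSemidef) (V : Matrix n m 𝕜) :
    0 ≤ compressionDet A V :=
  (RCLike.nonneg_iff.1 (hA.conjTranspose_mul_mul_same V).det_nonneg).1

theorem re_det_rpow_inv_card_le_re_trace_div_card [Nonempty m] {P : Matrix m m 𝕜}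
    (hP : P.PosSemidef) :
    RCLike.re P.det ^ (Fintype.card m : ℝ)⁻¹ ≤ RCLike.re P.trace / Fintype.card m := by
  have amgm := Real.geom_mean_le_arith_mean Finset.univ (fun _ => 1) hP.1.eigenvalues
    (fun _ _ => zero_le_one) (by simp [Fintype.card_pos]) fun i _ => hP.eigenvalues_nonneg i
  have det_eq : RCLike.re P.det = ∏ i, hP.1.eigenvalues i := by
    rw [hP.1.det_eq_prod_eigenvalues, ← RCLike.ofReal_prod, RCLike.ofReal_re]
  have trace_eq : RCLike.re P.trace = ∑ i, hP.1.eigenvalues i := by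
    rw [hP.1.trace_eq_sum_eigenvalues, ← RCLike.ofReal_sum, RCLike.ofReal_re]
  simpa [det_eq, trace_eq] using amgm

variable [DecidableEq n]

theorem factorial_mul_compressionDet_diagonal (d : n → ℝ) (W : Matrix n m 𝕜) :
    ((Fintype.card m).factorial : ℝ) * compressionDet (diagonal fun i => (d i : 𝕜)) W =
      ∑ g : m → n, (∏ i, d (g i)) * ‖(W.submatrix g id).det‖ ^ 2 := by
  have minor (g : m → n) :
      (Wᴴ.submatrix id g).det * ((diagonal (fun i => (d i : 𝕜)) * W).submatrix g id).det =
        (((∏ i, d (g i)) * ‖(W.submatrix g id).det‖ ^ 2 : ℝ) : 𝕜) := by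
    have row_scaling : (diagonal (fun i => (d i : 𝕜)) * W).submatrix g id =
        of fun i j => (d (g i) : 𝕜) * W.submatrix g id i j := by
      ext i j; simp [diagonal_mul]
    rw [row_scaling, det_mul_column, ← conjTranspose_submatrix, det_conjTranspose, mul_left_comm,
      RCLike.star_def, RCLike.conj_mul]
    push_cast
    rfl
  have h := factorial_mul_det_mul Wᴴ (diagonal (fun i => (d i : 𝕜)) * W)
  simp only [minor, ← Matrix.mul_assoc, ← RCLike.ofReal_sum] at h
  have h_re := congrArg RCLike.re h
  rwa [← RCLike.ofReal_natCast, RCLike.re_ofReal_mul, RCLike.ofReal_re] at h_re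

theorem factorial_mul_compressionDet_one (W : Matrix n m 𝕜) :
    ((Fintype.card m).factorial : ℝ) * compressionDet 1 W =
      ∑ g : m → n, ‖(W.submatrix g id).det‖ ^ 2 := by
  simpa using factorial_mul_compressionDet_diagonal (fun _ => 1) W

theorem mul_compressionDet_one_le_compressionDet_diagonal {d : n → ℝ} {c : ℝ}
    (hc : ∀ g : m → n, g.Injective → c ≤ ∏ i, d (g i)) (W : Matrix n m 𝕜) :
    c * compressionDet 1 W ≤ compressionDet (diagonal fun i => (d i : 𝕜)) W := by
  have hfact : (0 : ℝ) < (Fintype.card m).factorial := by positivity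
  refine le_of_mul_le_mul_left ?_ hfact
  rw [mul_left_comm, factorial_mul_compressionDet_one, factorial_mul_compressionDet_diagonal,
    Finset.mul_sum]
  refine Finset.sum_le_sum fun g _ => ?_
  by_cases hg : g.Injective
  · exact mul_le_mul_of_nonneg_right (hc g hg) (sq_nonneg _)
  · obtain ⟨i, j, hij, hne⟩ := Function.not_injective_iff.1 hg
    rw [det_zero_of_row_eq hne (by ext l; simp [hij])]
    simp

theorem mul_compressionDet_one_le {A : Matrix n n 𝕜} (hA : A.IsHermitian) {c : ℝ}
    (hc : ∀ g : m → n, g.Injective → c ≤ ∏ i, hA.eigenvalues (g i)) (V : Matrix n m 𝕜) :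
    c * compressionDet 1 V ≤ compressionDet A V := by
  set U := (hA.eigenvectorUnitary : Matrix n n 𝕜)
  have spectral : A = U * diagonal (fun i => (hA.eigenvalues i : 𝕜)) * Uᴴ := hA.spectral_theorem
  have hUU : U * 1 * Uᴴ = 1 := by
    rw [Matrix.mul_one]
    exact Unitary.coe_mul_star_self _
  have h := mul_compressionDet_one_le_compressionDet_diagonal hc (Uᴴ * V)
  rwa [← compressionDet_conjTranspose_mul_mul_same, ← compressionDet_conjTranspose_mul_mul_same,
    conjTranspose_conjTranspose, hUU, ← spectral] at h

theorem compressionDet_diagonal_rpow_le {d : n → ℝ} (hd : ∀ i, 0 ≤ d i) {t : ℝ}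
    (ht : t ∈ Set.Icc (0 : ℝ) 1) (W : Matrix n m 𝕜) :
    compressionDet (diagonal fun i => ((d i ^ t : ℝ) : 𝕜)) W ≤
      compressionDet 1 W ^ (1 - t) * compressionDet (diagonal fun i => (d i : 𝕜)) W ^ t := by
  have hfact : (0 : ℝ) < (Fintype.card m).factorial := by positivity
  have hD : (diagonal fun i => (d i : 𝕜)).PosSemidef :=
    .diagonal fun i => RCLike.ofReal_nonneg.2 (hd i)
  refine le_of_mul_le_mul_left ?_ hfact
  calc
    _ = ∑ g : m → n, (∏ i, d (g i)) ^ t * ‖(W.submatrix g id).det‖ ^ 2 := by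
      simp only [factorial_mul_compressionDet_diagonal,
        Real.finsetProd_rpow _ _ fun _ _ => hd _]
    _ ≤ ((Fintype.card m).factorial * compressionDet 1 W) ^ (1 - t) *
        ((Fintype.card m).factorial * compressionDet (diagonal fun i => (d i : 𝕜)) W) ^ t := by
      rw [factorial_mul_compressionDet_one, factorial_mul_compressionDet_diagonal]
      exact sum_rpow_mul_le_rpow_mul_rpow _ (fun _ => sq_nonneg _)
        (fun _ => Finset.prod_nonneg fun _ _ => hd _) ht
    _ = _ := by
      rw [Real.mul_rpow hfact.le (compressionDet_nonneg .one W),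
        Real.mul_rpow hfact.le (compressionDet_nonneg hD W), mul_mul_mul_comm,
        ← Real.rpow_add hfact, sub_add_cancel, Real.rpow_one]

end CompressionDeterminants

section SmallestEigenvalues

open Matrix

theorem prod_castLE_le_prod_of_injective {R : Type*} [CommMonoidWithZero R] [PartialOrder R]
    [ZeroLEOneClass R] [PosMulMono R] {k n : ℕ} (hkn : k ≤ n) {x : Fin n → R} (hx : Monotone x)
    (hx0 : ∀ i, 0 ≤ x i) {g : Fin k → Fin n} (hg : g.Injective) :
    ∏ i : Fin k, x (Fin.castLE hkn i) ≤ ∏ i, x (g i) := by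
  have hcard : (Finset.univ.image g).card = k := by
    rw [Finset.card_image_of_injective _ hg, Finset.card_fin]
  let e := (Finset.univ.image g).orderEmbOfFin hcard
  have castLE_le (i : Fin k) : Fin.castLE hkn i ≤ e i := by
    have h := Finset.card_le_card_of_injOn (s := Finset.Iio i) (t := Finset.Iio (e i)) e
      (fun j hj => by simpa using hj) e.injective.injOn
    simpa [Fin.le_def] using h
  calc
    _ ≤ ∏ i, x (e i) := Finset.prod_le_prod (fun i _ => hx0 _) fun i _ => hx (castLE_le i)
    _ = ∏ j ∈ Finset.univ.image g, x j := by
      rw [← Finset.image_orderEmbOfFin_univ _ hcard, Finset.prod_image e.injective.injOn]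
    _ = ∏ i, x (g i) := Finset.prod_image hg.injOn

variable {n k : ℕ} {A : Matrix (Fin n) (Fin n) ℂ}

theorem monotone_eigUp (hA : A.IsHermitian) : Monotone (eigUp hA) :=
  Tuple.monotone_sort hA.eigenvalues

theorem prodSmall_eq_prod_castLE (hA : A.IsHermitian) (hkn : k ≤ n) :
    prodSmall A k = ∏ i : Fin k, eigUp hA (Fin.castLE hkn i) := by
  have filter_eq : Finset.univ.filter (fun i : Fin n => (i : ℕ) < k) =
      Finset.univ.map (Fin.castLEEmb hkn) := by
    ext i
    simp only [Finset.mem_filter, Finset.mem_univ, true_and, Finset.mem_map, Fin.castLEEmb_apply]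
    exact ⟨fun hi => ⟨⟨i, hi⟩, rfl⟩, by rintro ⟨j, rfl⟩; exact j.2⟩
  rw [prodSmall, dif_pos hA, filter_eq, Finset.prod_map]
  rfl

theorem prodSmall_pos (hA : A.PosDef) (k : ℕ) : 0 < prodSmall A k := by
  rw [prodSmall, dif_pos hA.1]
  exact Finset.prod_pos fun i _ => hA.eigenvalues_pos _

theorem prodSmall_nonneg (hA : A.PosSemidef) (k : ℕ) : 0 ≤ prodSmall A k := by
  rw [prodSmall, dif_pos hA.1]
  exact Finset.prod_nonneg fun i _ => hA.eigenvalues_nonneg _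

theorem prodSmall_le_prod_eigenvalues (hA : A.PosSemidef) (hkn : k ≤ n) {g : Fin k → Fin n}
    (hg : g.Injective) : prodSmall A k ≤ ∏ i, hA.1.eigenvalues (g i) := by
  have h := prod_castLE_le_prod_of_injective hkn (monotone_eigUp hA.1)
    (fun i => hA.eigenvalues_nonneg _) ((Tuple.sort hA.1.eigenvalues).symm.injective.comp hg)
  simpa [prodSmall_eq_prod_castLE hA.1 hkn, eigUp] using h

theorem prodSmall_mul_compressionDet_one_le (hA : A.PosSemidef) (hkn : k ≤ n)
    (V : Matrix (Fin n) (Fin k) ℂ) :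
    prodSmall A k * compressionDet 1 V ≤ compressionDet A V :=
  mul_compressionDet_one_le hA.1 (fun _ => prodSmall_le_prod_eigenvalues hA hkn) V

theorem exists_mul_eq_mul_diagonal_eigUp (hA : A.IsHermitian) (hkn : k ≤ n) :
    ∃ V : Matrix (Fin n) (Fin k) ℂ, Vᴴ * V = 1 ∧
      A * V = V * diagonal fun i => (eigUp hA (Fin.castLE hkn i) : ℂ) := by
  let s : Fin k → Fin n := Tuple.sort hA.eigenvalues ∘ Fin.castLE hkn
  have hs : s.Injective := (Tuple.sort hA.eigenvalues).injective.comp (Fin.castLE_injective hkn)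
  let U := (hA.eigenvectorUnitary : Matrix (Fin n) (Fin n) ℂ)
  have hU : Uᴴ * U = 1 := Unitary.coe_star_mul_self _
  have hAU : A * U = U * diagonal fun i => (hA.eigenvalues i : ℂ) := by
    have spectral : A = U * diagonal (fun i => (hA.eigenvalues i : ℂ)) * Uᴴ := hA.spectral_theorem
    conv_lhs => rw [spectral, Matrix.mul_assoc, hU, Matrix.mul_one]
  refine ⟨U.submatrix id s, ?_, ?_⟩
  · rw [conjTranspose_submatrix, ← submatrix_mul _ _ _ _ _ Function.bijective_id, hU,
      submatrix_one _ hs]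
  · ext i j
    simpa [Matrix.mul_apply, diagonal_apply, eigUp, s] using congrFun₂ hAU i (s j)

end SmallestEigenvalues

section SquareRoots

open Matrix
open scoped MatrixOrder

variable {n : ℕ} {A : Matrix (Fin n) (Fin n) ℂ}

theorem conjTranspose_sqrtM (A : Matrix (Fin n) (Fin n) ℂ) : (sqrtM A)ᴴ = sqrtM A :=
  cfc_predicate Real.sqrt A

theorem conjTranspose_invSqrtM (A : Matrix (Fin n) (Fin n) ℂ) : (invSqrtM A)ᴴ = invSqrtM A :=
  cfc_predicate (fun x : ℝ => (√x)⁻¹) A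

theorem sqrtM_mul_sqrtM (hA : A.PosSemidef) : sqrtM A * sqrtM A = A := by
  have spectrum_nonneg {x : ℝ} (hx : x ∈ spectrum ℝ A) : 0 ≤ x :=
    spectrum_nonneg_of_nonneg hA.nonneg hx
  calc
    _ = cfc (fun x => √x * √x) A := (cfc_mul Real.sqrt Real.sqrt A).symm
    _ = cfc id A := cfc_congr fun x hx => Real.mul_self_sqrt (spectrum_nonneg hx)
    _ = A := cfc_id ℝ A (ha := hA.1)

theorem sqrtM_mul_invSqrtM (hA : A.PosDef) : sqrtM A * invSqrtM A = 1 := by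
  have spectrum_pos {x : ℝ} (hx : x ∈ spectrum ℝ A) : 0 < x :=
    hA.isStrictlyPositive.spectrum_pos hx
  calc
    _ = cfc (fun x => √x * (√x)⁻¹) A :=
      (cfc_mul Real.sqrt _ A (hg := A.finite_real_spectrum.continuousOn _)).symm
    _ = cfc (fun _ => 1) A :=
      cfc_congr fun x hx => mul_inv_cancel₀ (Real.sqrt_pos.2 (spectrum_pos hx)).ne'
    _ = 1 := cfc_const_one ℝ A (ha := hA.1)

theorem invSqrtM_mul_sqrtM (hA : A.PosDef) : invSqrtM A * sqrtM A = 1 :=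
  mul_eq_one_comm.1 (sqrtM_mul_invSqrtM hA)

theorem invSqrtM_mul_self_mul_invSqrtM (hA : A.PosDef) : invSqrtM A * A * invSqrtM A = 1 := by
  calc
    _ = invSqrtM A * (sqrtM A * sqrtM A) * invSqrtM A := by rw [sqrtM_mul_sqrtM hA.posSemidef]
    _ = 1 := by
      rw [← mul_assoc, invSqrtM_mul_sqrtM hA, one_mul, sqrtM_mul_invSqrtM hA]

theorem invSqrtM_mul_invSqrtM (hA : A.PosDef) : invSqrtM A * invSqrtM A = A⁻¹ := by
  refine (inv_eq_left_inv ?_).symm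
  rw [mul_assoc, mul_eq_one_comm, invSqrtM_mul_self_mul_invSqrtM hA]

end SquareRoots

section InverseCompressions

open Matrix

variable {n k : ℕ} {A : Matrix (Fin n) (Fin n) ℂ}

theorem compressionDet_one_invSqrtM_mul (hA : A.PosDef) (V : Matrix (Fin n) (Fin k) ℂ) :
    compressionDet 1 (invSqrtM A * V) = compressionDet A⁻¹ V := by
  rw [← compressionDet_conjTranspose_mul_mul_same, conjTranspose_invSqrtM, mul_one,
    invSqrtM_mul_invSqrtM hA]

theorem prodSmall_mul_compressionDet_inv_le (hA : A.PosDef) (hkn : k ≤ n)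
    (V : Matrix (Fin n) (Fin k) ℂ) :
    prodSmall A k * compressionDet A⁻¹ V ≤ compressionDet 1 V := by
  have h := prodSmall_mul_compressionDet_one_le hA.posSemidef hkn (invSqrtM A * V)
  rwa [compressionDet_one_invSqrtM_mul hA, ← compressionDet_conjTranspose_mul_mul_same,
    conjTranspose_invSqrtM, invSqrtM_mul_self_mul_invSqrtM hA] at h

theorem exists_prodSmall_mul_compressionDet_inv_eq_one (hA : A.PosDef) (hkn : k ≤ n) :
    ∃ V : Matrix (Fin n) (Fin k) ℂ, Vᴴ * V = 1 ∧ prodSmall A k * compressionDet A⁻¹ V = 1 := by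
  obtain ⟨V, hV, hAV⟩ := exists_mul_eq_mul_diagonal_eigUp hA.1 hkn
  refine ⟨V, hV, ?_⟩
  have hinv : Vᴴ * A⁻¹ * V * diagonal (fun i => (eigUp hA.1 (Fin.castLE hkn i) : ℂ)) = 1 := by
    rw [Matrix.mul_assoc, ← hAV, ← Matrix.mul_assoc, Matrix.mul_assoc Vᴴ,
      nonsing_inv_mul _ (isUnit_iff_isUnit_det _ |>.1 hA.isUnit), Matrix.mul_one, hV]
  have hdet := congrArg (fun M : Matrix (Fin k) (Fin k) ℂ => M.det.re) hinv
  simpa [← Complex.ofReal_prod, ← prodSmall_eq_prod_castLE hA.1 hkn, compressionDet, mul_comm]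
    using hdet

end InverseCompressions

section Geodesics

open Matrix

variable {n k : ℕ} {A B : Matrix (Fin n) (Fin n) ℂ}

theorem posDef_invSqrtM_mul_mul_invSqrtM (hA : A.PosDef) (hB : B.PosDef) :
    (invSqrtM A * B * invSqrtM A).PosDef := by
  have hunit : IsUnit (invSqrtM A) := .of_mul_eq_one _ (invSqrtM_mul_sqrtM hA)
  have h := (hunit.posDef_star_left_conjugate_iff (x := B)).2 hB
  rwa [star_eq_conjTranspose, conjTranspose_invSqrtM] at h

theorem sharp_zero (hA : A.PosDef) (hB : B.PosDef) : sharp 0 A B = A := by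
  have hC := posDef_invSqrtM_mul_mul_invSqrtM hA hB
  have hcfc : cfc (fun x : ℝ => x ^ (0 : ℝ)) (invSqrtM A * B * invSqrtM A) = 1 :=
    (cfc_congr fun x _ => x.rpow_zero).trans (cfc_const_one ℝ _ (ha := hC.1))
  calc
    _ = sqrtM A * 1 * sqrtM A := congrArg (sqrtM A * · * sqrtM A) hcfc
    _ = A := by rw [mul_one, sqrtM_mul_sqrtM hA.posSemidef]

theorem sharp_one (hA : A.PosDef) (hB : B.PosDef) : sharp 1 A B = B := by
  have hC := posDef_invSqrtM_mul_mul_invSqrtM hA hB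
  have hcfc : cfc (fun x : ℝ => x ^ (1 : ℝ)) (invSqrtM A * B * invSqrtM A) =
      invSqrtM A * B * invSqrtM A :=
    (cfc_congr fun x _ => x.rpow_one).trans (cfc_id' ℝ _ (ha := hC.1))
  calc
    _ = sqrtM A * (invSqrtM A * B * invSqrtM A) * sqrtM A :=
      congrArg (sqrtM A * · * sqrtM A) hcfc
    _ = sqrtM A * invSqrtM A * B * (invSqrtM A * sqrtM A) := by simp only [mul_assoc]
    _ = B := by rw [sqrtM_mul_invSqrtM hA, invSqrtM_mul_sqrtM hA, one_mul, mul_one]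

theorem exists_sharp_eq_mul_diagonal_mul_conjTranspose (hA : A.PosDef) (hB : B.PosDef) :
    ∃ (T : Matrix (Fin n) (Fin n) ℂ) (d : Fin n → ℝ), IsUnit T ∧ (∀ i, 0 < d i) ∧
      ∀ t : ℝ, sharp t A B = T * diagonal (fun i => ((d i ^ t : ℝ) : ℂ)) * Tᴴ := by
  have hC := posDef_invSqrtM_mul_mul_invSqrtM hA hB
  let U := (hC.1.eigenvectorUnitary : Matrix (Fin n) (Fin n) ℂ)
  have hU : IsUnit U := .of_mul_eq_one _ (Unitary.coe_mul_star_self hC.1.eigenvectorUnitary)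
  have hR : IsUnit (sqrtM A) := .of_mul_eq_one _ (sqrtM_mul_invSqrtM hA)
  refine ⟨sqrtM A * U, hC.1.eigenvalues, hR.mul hU, hC.eigenvalues_pos, fun t => ?_⟩
  have hcfc : cfc (fun x : ℝ => x ^ t) (invSqrtM A * B * invSqrtM A) =
      U * diagonal (fun i => ((hC.1.eigenvalues i ^ t : ℝ) : ℂ)) * Uᴴ := hC.1.cfc_eq _
  calc
    _ = sqrtM A * (U * diagonal (fun i => ((hC.1.eigenvalues i ^ t : ℝ) : ℂ)) * Uᴴ) * sqrtM A :=
      congrArg (sqrtM A * · * sqrtM A) hcfc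
    _ = _ := by simp only [conjTranspose_mul, conjTranspose_sqrtM, mul_assoc]

theorem posDef_sharp (t : ℝ) (hA : A.PosDef) (hB : B.PosDef) : (sharp t A B).PosDef := by
  obtain ⟨T, d, hT, hd, hsharp⟩ := exists_sharp_eq_mul_diagonal_mul_conjTranspose hA hB
  have hD : (diagonal fun i => ((d i ^ t : ℝ) : ℂ)).PosDef :=
    .diagonal fun i => by exact_mod_cast Real.rpow_pos_of_pos (hd i) t
  rw [hsharp]
  exact hT.posDef_star_right_conjugate_iff.2 hD

theorem continuous_sharp (hA : A.PosDef) (hB : B.PosDef) : Continuous fun t => sharp t A B := by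
  obtain ⟨T, d, -, hd, hsharp⟩ := exists_sharp_eq_mul_diagonal_mul_conjTranspose hA hB
  have hpow (i : Fin n) : Continuous fun t : ℝ => d i ^ t :=
    Real.continuous_const_rpow (hd i).ne'
  simp only [hsharp]
  fun_prop

theorem compressionDet_inv_sharp_le (hA : A.PosDef) (hB : B.PosDef) {t : ℝ}
    (ht : t ∈ Set.Icc (0 : ℝ) 1) (V : Matrix (Fin n) (Fin k) ℂ) :
    compressionDet (sharp t A B)⁻¹ V ≤
      compressionDet A⁻¹ V ^ (1 - t) * compressionDet B⁻¹ V ^ t := by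
  obtain ⟨T, d, -, hd, hsharp⟩ := exists_sharp_eq_mul_diagonal_mul_conjTranspose hA hB
  have hinv (s : ℝ) : compressionDet (sharp s A B)⁻¹ V =
      compressionDet (diagonal fun i => (((d i)⁻¹ ^ s : ℝ) : ℂ)) (T⁻¹ * V) := by
    have hD : (diagonal fun i => ((d i ^ s : ℝ) : ℂ))⁻¹ =
        diagonal fun i => (((d i)⁻¹ ^ s : ℝ) : ℂ) := by
      refine inv_eq_left_inv ?_
      simp [diagonal_mul_diagonal, Real.inv_rpow (hd _).le, (Real.rpow_pos_of_pos (hd _) s).ne']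
    rw [← compressionDet_conjTranspose_mul_mul_same, hsharp, Matrix.mul_inv_rev,
      Matrix.mul_inv_rev, hD, conjTranspose_nonsing_inv, mul_assoc]
  have hA_inv : compressionDet A⁻¹ V = compressionDet 1 (T⁻¹ * V) := by
    simpa [sharp_zero hA hB] using hinv 0
  have hB_inv : compressionDet B⁻¹ V =
      compressionDet (diagonal fun i => (((d i)⁻¹ : ℝ) : ℂ)) (T⁻¹ * V) := by
    simpa only [sharp_one hA hB, Real.rpow_one] using hinv 1
  rw [hinv, hA_inv, hB_inv]
  exact compressionDet_diagonal_rpow_le (𝕜 := ℂ) (fun i => (inv_pos.2 (hd i)).le) ht _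

theorem prodSmall_rpow_mul_prodSmall_rpow_le_prodSmall_sharp (hA : A.PosDef) (hB : B.PosDef)
    (hkn : k ≤ n) {t : ℝ} (ht : t ∈ Set.Icc (0 : ℝ) 1) :
    prodSmall A k ^ (1 - t) * prodSmall B k ^ t ≤ prodSmall (sharp t A B) k := by
  have hG := posDef_sharp t hA hB
  obtain ⟨V, hV, hGV⟩ := exists_prodSmall_mul_compressionDet_inv_eq_one hG hkn
  have inv_le {X : Matrix (Fin n) (Fin n) ℂ} (hX : X.PosDef) :
      prodSmall X k * compressionDet X⁻¹ V ≤ 1 := by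
    simpa [compressionDet, hV] using prodSmall_mul_compressionDet_inv_le hX hkn V
  have inv_nonneg {X : Matrix (Fin n) (Fin n) ℂ} (hX : X.PosDef) : 0 ≤ compressionDet X⁻¹ V :=
    compressionDet_nonneg hX.inv.posSemidef V
  have ha := (prodSmall_pos hA k).le
  have hb := (prodSmall_pos hB k).le
  have hg := (prodSmall_pos hG k).le
  calc
    _ = prodSmall A k ^ (1 - t) * prodSmall B k ^ t *
        (prodSmall (sharp t A B) k * compressionDet (sharp t A B)⁻¹ V) := by rw [hGV, mul_one]
    _ ≤ prodSmall A k ^ (1 - t) * prodSmall B k ^ t * (prodSmall (sharp t A B) k *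
        (compressionDet A⁻¹ V ^ (1 - t) * compressionDet B⁻¹ V ^ t)) := by
      gcongr
      exact compressionDet_inv_sharp_le hA hB ht V
    _ = prodSmall (sharp t A B) k * ((prodSmall A k * compressionDet A⁻¹ V) ^ (1 - t) *
        (prodSmall B k * compressionDet B⁻¹ V) ^ t) := by
      rw [Real.mul_rpow ha (inv_nonneg hA), Real.mul_rpow hb (inv_nonneg hB)]
      ring
    _ ≤ prodSmall (sharp t A B) k := by
      refine mul_le_of_le_one_right hg (mul_le_one₀ ?_ ?_ ?_)
      · exact Real.rpow_le_one (mul_nonneg ha (inv_nonneg hA)) (inv_le hA) (sub_nonneg.2 ht.2)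
      · exact Real.rpow_nonneg (mul_nonneg hb (inv_nonneg hB)) t
      · exact Real.rpow_le_one (mul_nonneg hb (inv_nonneg hB)) (inv_le hB) ht.1

end Geodesics

section ConcavityOfProdSmall

open Matrix

variable {n k : ℕ}

theorem exists_linearMap_supporting_prodSmall_rpow_inv {M : Matrix (Fin n) (Fin n) ℂ}
    (hM : M.PosDef) (hk : k ≠ 0) (hkn : k ≤ n) :
    ∃ φ : Matrix (Fin n) (Fin n) ℂ →ₗ[ℝ] ℝ, φ M = prodSmall M k ^ (k : ℝ)⁻¹ ∧
      ∀ X : Matrix (Fin n) (Fin n) ℂ, X.PosSemidef → prodSmall X k ^ (k : ℝ)⁻¹ ≤ φ X := by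
  have : NeZero k := ⟨hk⟩
  have hk0 : (k : ℝ) ≠ 0 := Nat.cast_ne_zero.2 hk
  obtain ⟨V, hV, hMV⟩ := exists_prodSmall_mul_compressionDet_inv_eq_one hM hkn
  let W := invSqrtM M * V
  have hMW : Wᴴ * M * W = 1 := by
    calc
      _ = Vᴴ * (invSqrtM M * M * invSqrtM M) * V := by
        simp only [W, conjTranspose_mul, conjTranspose_invSqrtM, Matrix.mul_assoc]
      _ = 1 := by rw [invSqrtM_mul_self_mul_invSqrtM hM, Matrix.mul_one, hV]
  have hW : prodSmall M k * compressionDet 1 W = 1 := by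
    rw [compressionDet_one_invSqrtM_mul hM, hMV]
  have hM0 := prodSmall_pos hM k
  have hW0 := compressionDet_nonneg .one W
  refine ⟨(prodSmall M k ^ (k : ℝ)⁻¹ / k) • compressionTrace W, ?_, fun X hX => ?_⟩
  · simp [compressionTrace, hMW, hk0]
  have hX0 := prodSmall_nonneg hX k
  have amgm := re_det_rpow_inv_card_le_re_trace_div_card (hX.conjTranspose_mul_mul_same W)
  rw [Fintype.card_fin] at amgm
  calc
    prodSmall X k ^ (k : ℝ)⁻¹ =
        (prodSmall M k * (prodSmall X k * compressionDet 1 W)) ^ (k : ℝ)⁻¹ := by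
      rw [mul_left_comm, hW, mul_one]
    _ ≤ (prodSmall M k * compressionDet X W) ^ (k : ℝ)⁻¹ := by
      gcongr
      exact prodSmall_mul_compressionDet_one_le hX hkn W
    _ = prodSmall M k ^ (k : ℝ)⁻¹ * compressionDet X W ^ (k : ℝ)⁻¹ :=
      Real.mul_rpow hM0.le (compressionDet_nonneg hX W)
    _ ≤ prodSmall M k ^ (k : ℝ)⁻¹ * (compressionTrace W X / k) :=
      mul_le_mul_of_nonneg_left amgm (Real.rpow_nonneg hM0.le _)
    _ = _ := by simp [div_mul_eq_mul_div, mul_div_assoc]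

end ConcavityOfProdSmall

section GeodesicMean

open Matrix MeasureTheory

theorem integrable_of_continuousOn_of_ae_mem {α E : Type*} [TopologicalSpace α]
    [T2Space α] [SecondCountableTopology α] [MeasurableSpace α] [OpensMeasurableSpace α]
    [NormedAddCommGroup E] {μ : Measure α} [IsFiniteMeasureOnCompacts μ] {K : Set α}
    (hK : IsCompact K) (hμ : ∀ᵐ x ∂μ, x ∈ K) {f : α → E} (hf : ContinuousOn f K) :
    Integrable f μ := by
  have h := hf.integrableOn_compact (μ := μ) hK
  rwa [IntegrableOn, Measure.restrict_eq_self_of_ae_mem hμ] at h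

variable {n : ℕ} {A B : Matrix (Fin n) (Fin n) ℂ} {ν : Measure ℝ} [IsFiniteMeasure ν]
  {E : Type*} [NormedAddCommGroup E] [NormedSpace ℝ E]

theorem integrable_map_sharp (hν : ∀ᵐ α ∂ν, α ∈ Set.Icc (0 : ℝ) 1) (hA : A.PosDef)
    (hB : B.PosDef) (φ : Matrix (Fin n) (Fin n) ℂ →ₗ[ℝ] E) :
    Integrable (fun α => φ (sharp α A B)) ν :=
  integrable_of_continuousOn_of_ae_mem isCompact_Icc hν
    (φ.continuous_of_finiteDimensional.comp (continuous_sharp hA hB)).continuousOn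

theorem map_gmean [CompleteSpace E] (hν : ∀ᵐ α ∂ν, α ∈ Set.Icc (0 : ℝ) 1) (hA : A.PosDef)
    (hB : B.PosDef) (φ : Matrix (Fin n) (Fin n) ℂ →ₗ[ℝ] E) :
    φ (gmean ν A B) = ∫ α, φ (sharp α A B) ∂ν :=
  (φ.toContinuousLinearMap.integral_comp_comm (integrable_map_sharp hν hA hB .id)).symm

theorem posDef_gmean [NeZero ν] (hν : ∀ᵐ α ∂ν, α ∈ Set.Icc (0 : ℝ) 1) (hA : A.PosDef)
    (hB : B.PosDef) : (gmean ν A B).PosDef := by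
  have herm : (gmean ν A B).IsHermitian := by
    let starMap := (starL' ℝ (A := Matrix (Fin n) (Fin n) ℂ)).toLinearMap
    calc
      _ = ∫ α, (sharp α A B)ᴴ ∂ν := map_gmean hν hA hB starMap
      _ = gmean ν A B := integral_congr_ae (.of_forall fun α => (posDef_sharp α hA hB).1)
  refine .of_dotProduct_mulVec_pos herm fun x hx => ?_
  let quadratic := compressionTrace (replicateCol (Fin 1) x)
  have quadratic_apply (X : Matrix (Fin n) (Fin n) ℂ) :
      quadratic X = (star x ⬝ᵥ X *ᵥ x).re := by
    rw [dotProduct_mulVec]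
    exact congrArg Complex.re (trace_fin_one _)
  have sharp_pos (α : ℝ) : 0 < quadratic (sharp α A B) := by
    rw [quadratic_apply]
    exact (posDef_sharp α hA hB).re_dotProduct_pos hx
  have gmean_pos : 0 < quadratic (gmean ν A B) := by
    rw [map_gmean hν hA hB, integral_pos_iff_support_of_nonneg (fun α => (sharp_pos α).le)
      (integrable_map_sharp hν hA hB quadratic),
      Function.support_eq_univ fun α => (sharp_pos α).ne']
    exact NeZero.pos _
  rw [quadratic_apply] at gmean_pos
  exact RCLike.pos_iff.2 ⟨gmean_pos, herm.im_star_dotProduct_mulVec_self x⟩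

end GeodesicMean

theorem stmt_11 {n : ℕ} (ν : MeasureTheory.Measure ℝ) [MeasureTheory.IsProbabilityMeasure ν]
    (hν : ν (Set.Icc (0 : ℝ) 1) = 1)
    (A B : Matrix (Fin n) (Fin n) ℂ) (hA : A.PosDef) (hB : B.PosDef)
    (k : ℕ) (hk1 : 1 ≤ k) (hkn : k ≤ n) :
    ∫ α, (prodSmall A k ^ ((k : ℝ)⁻¹)) ^ (1 - α) * (prodSmall B k ^ ((k : ℝ)⁻¹)) ^ α ∂ν
      ≤ prodSmall (gmean ν A B) k ^ ((k : ℝ)⁻¹) := by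
  have hmem : ∀ᵐ α ∂ν, α ∈ Set.Icc (0 : ℝ) 1 :=
    (MeasureTheory.mem_ae_iff_prob_eq_one measurableSet_Icc).2 hν
  have ha := (prodSmall_pos hA k).le
  have hb := (prodSmall_pos hB k).le
  obtain ⟨φ, hφ_eq, hφ_le⟩ := exists_linearMap_supporting_prodSmall_rpow_inv
    (posDef_gmean hmem hA hB) (Nat.one_le_iff_ne_zero.1 hk1) hkn
  rw [← hφ_eq, map_gmean hmem hA hB]
  refine MeasureTheory.integral_mono_of_nonneg (.of_forall fun α => by positivity)
    (integrable_map_sharp hmem hA hB φ) ?_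
  filter_upwards [hmem] with α hα
  calc
    _ = (prodSmall A k ^ (1 - α) * prodSmall B k ^ α) ^ (k : ℝ)⁻¹ := by
      rw [Real.mul_rpow (Real.rpow_nonneg ha _) (Real.rpow_nonneg hb _)]
      simp only [← Real.rpow_mul ha, ← Real.rpow_mul hb, mul_comm]
    _ ≤ prodSmall (sharp α A B) k ^ (k : ℝ)⁻¹ := by
      gcongr
      exact prodSmall_rpow_mul_prodSmall_rpow_le_prodSmall_sharp hA hB hkn hα
    _ ≤ φ (sharp α A B) := hφ_le _ (posDef_sharp α hA hB).posSemidef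
end

section
/- Let Z be an n×n positive semidefinite complex matrix and k ∈ {1,…,n}. Then the sum of the k smallest eigenvalues of Z, ‖Z‖_{{k}} := ∑_{j=1}^k μ_{n+1-j}(Z), equals the minimum of Tr(ZP) over all orthogonal projections P ∈ M_n(ℂ) of rank k, and also equals the maximum of k·μ_n(A) − Tr(B) over all pairs of positive semidefinite matrices A, B with Z = A − B. -/
open scoped ComplexOrder

/-- the smallest eigenvalue of a Hermitian matrix -/
noncomputable def minEig {n : ℕ} (A : Matrix (Fin n) (Fin n) ℂ) : ℝ :=
  if hA : A.IsHermitian then ⨅ i, hA.eigenvalues i else 0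

/-!
Weak duality: if `Z = A - B` with `c ≤ A` and `0 ≤ B`, and `P` is a projection of rank `k`, then
`Tr (Z P) - (k c - Tr B) = Tr ((A - c) P) + Tr (B (1 - P)) ≥ 0`. Taking `c = μ_n(A)`, every value
of the maximization problem is at most every value of the minimization problem. Both problems
attain the sum of the `k` smallest eigenvalues: let `P` project onto the corresponding eigenvectors,
and let `A` be obtained from `Z` by raising these eigenvalues to a common threshold `c` that
separates them from the others. If `Z ≥ 0`, then `A = Z + B ≥ 0` is automatic.
-/

open Matrix
open scoped MatrixOrder

section General

lemma exists_forall_mem_le_and_forall_notMem_le {κ α : Type*} [Finite κ] [LinearOrder α]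
    [Nonempty α] {f : κ → α} {S : Finset κ} (hS : ∀ i ∈ S, ∀ j ∉ S, f i ≤ f j) :
    ∃ c, (∀ i ∈ S, f i ≤ c) ∧ ∀ j ∉ S, c ≤ f j := by
  rcases S.eq_empty_or_nonempty with rfl | hne
  · obtain ⟨c, hc⟩ := (Set.finite_range f).bddBelow
    exact ⟨c, by simp, fun j _ => hc ⟨j, rfl⟩⟩
  · exact ⟨S.sup' hne f, fun i hi => S.le_sup' f hi,
      fun j hj => Finset.sup'_le hne f fun i hi => hS i hi j hj⟩

variable {ι 𝕜 : Type*} [Fintype ι] [RCLike 𝕜]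

lemma trace_mul_nonneg {X Y : Matrix ι ι 𝕜} (hX : 0 ≤ X) (hY : 0 ≤ Y) : 0 ≤ (X * Y).trace := by
  classical
  obtain ⟨C, rfl⟩ := CStarAlgebra.nonneg_iff_eq_star_mul_self.mp hY
  rw [← mul_assoc, trace_mul_comm, ← mul_assoc]
  exact (hX.posSemidef.mul_mul_conjTranspose_same C).trace_nonneg

lemma trace_eq_rank_of_isIdempotentElem {K : Type*} [Field K] {P : Matrix ι ι K}
    (hP : IsIdempotentElem P) : P.trace = P.rank := by
  classical
  have hproj := LinearMap.IsIdempotentElem.isProj_range _ (hP.map (toLinAlgEquiv' (R := K)))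
  rw [← trace_toLin'_eq]
  exact hproj.trace

variable [DecidableEq ι]

lemma rank_mul_sub_trace_le_trace_mul {A B P : Matrix ι ι 𝕜} {c : ℝ}
    (hA : algebraMap ℝ (Matrix ι ι 𝕜) c ≤ A) (hB : 0 ≤ B) (hP : IsStarProjection P) :
    P.rank * (c : 𝕜) - B.trace ≤ ((A - B) * P).trace := by
  have hAP : 0 ≤ ((A - algebraMap ℝ (Matrix ι ι 𝕜) c) * P).trace :=
    trace_mul_nonneg (sub_nonneg.mpr hA) hP.nonneg
  have hBP : 0 ≤ (B * (1 - P)).trace := trace_mul_nonneg hB hP.one_sub.nonneg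
  have hcP : (algebraMap ℝ (Matrix ι ι 𝕜) c * P).trace = P.rank * (c : 𝕜) := by
    rw [← Algebra.smul_def, trace_smul, trace_eq_rank_of_isIdempotentElem hP.isIdempotentElem,
      RCLike.real_smul_eq_coe_mul, mul_comm]
  rw [← sub_nonneg]
  convert add_nonneg hAP hBP using 1
  simp only [sub_mul, mul_sub, mul_one, trace_sub, hcP]
  ring

/-- The spectral calculus of a Hermitian matrix: `spectralHom hA f` has eigenvalue `f i` on the
`i`-th eigenvector of `A`. Unlike in `cfc`, `f` is a function of the index `i` and not of the
eigenvalue, so that eigenvectors with the same eigenvalue can be told apart. -/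
noncomputable def spectralHom {A : Matrix ι ι 𝕜} (hA : A.IsHermitian) :
    (ι → ℝ) →⋆ₐ[ℝ] Matrix ι ι 𝕜 :=
  (StarAlgHomClass.toStarAlgHom (Unitary.conjStarAlgAut ℝ _ hA.eigenvectorUnitary)).comp
    { (diagonalAlgHom ℝ).comp (RCLike.ofRealAm.compLeft ι) with
      map_star' _ := by simp [star_eq_conjTranspose, Pi.star_def] }

variable {A : Matrix ι ι 𝕜} (hA : A.IsHermitian)

lemma spectralHom_eigenvalues : spectralHom hA hA.eigenvalues = A :=
  hA.spectral_theorem.symm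

lemma trace_spectralHom (f : ι → ℝ) : (spectralHom hA f).trace = ((∑ i, f i : ℝ) : 𝕜) := by
  change (Unitary.conjStarAlgAut ℝ _ hA.eigenvectorUnitary (diagonal fun i => (f i : 𝕜))).trace = _
  rw [Unitary.conjStarAlgAut_apply, trace_mul_cycle, Unitary.coe_star_mul_self, one_mul,
    trace_diagonal, RCLike.ofReal_sum]

lemma trace_mul_spectralHom (f : ι → ℝ) :
    (A * spectralHom hA f).trace = ((∑ i, hA.eigenvalues i * f i : ℝ) : 𝕜) := by
  nth_rw 1 [← spectralHom_eigenvalues hA]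
  rw [← map_mul, trace_spectralHom]
  rfl

lemma algebraMap_le_add_spectralHom {f : ι → ℝ} {c : ℝ} (hf : ∀ i, c ≤ hA.eigenvalues i + f i) :
    algebraMap ℝ (Matrix ι ι 𝕜) c ≤ A + spectralHom hA f :=
  calc algebraMap ℝ (Matrix ι ι 𝕜) c
      = spectralHom hA (algebraMap ℝ (ι → ℝ) c) := (AlgHomClass.commutes _ c).symm
    _ ≤ spectralHom hA (hA.eigenvalues + f) := OrderHomClass.mono _ hf
    _ = A + spectralHom hA f := by rw [map_add, spectralHom_eigenvalues]

/-- The orthogonal projection onto the span of the eigenvectors of `A` with index in `S`. -/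
noncomputable def spectralProj (S : Finset ι) : Matrix ι ι 𝕜 :=
  spectralHom hA fun i => if i ∈ S then 1 else 0

lemma isStarProjection_spectralProj (S : Finset ι) : IsStarProjection (spectralProj hA S) :=
  IsStarProjection.map ⟨by ext; simp, by ext; simp⟩ (spectralHom hA)

lemma rank_spectralProj (S : Finset ι) : (spectralProj hA S).rank = S.card := by
  have htrace :=
    trace_eq_rank_of_isIdempotentElem (isStarProjection_spectralProj hA S).isIdempotentElem
  rw [spectralProj, trace_spectralHom, Finset.sum_boole] at htrace
  simpa [spectralProj] using htrace.symm

lemma trace_mul_spectralProj (S : Finset ι) :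
    (A * spectralProj hA S).trace = ((∑ i ∈ S, hA.eigenvalues i : ℝ) : 𝕜) := by
  rw [spectralProj, trace_mul_spectralHom]
  simp

lemma exists_nonneg_algebraMap_le_add_trace_eq {S : Finset ι}
    (hS : ∀ i ∈ S, ∀ j ∉ S, hA.eigenvalues i ≤ hA.eigenvalues j) :
    ∃ (B : Matrix ι ι 𝕜) (c : ℝ), 0 ≤ B ∧ algebraMap ℝ (Matrix ι ι 𝕜) c ≤ A + B ∧
      B.trace = ((S.card * c - ∑ i ∈ S, hA.eigenvalues i : ℝ) : 𝕜) := by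
  obtain ⟨c, hle, hge⟩ := exists_forall_mem_le_and_forall_notMem_le hS
  let f : ι → ℝ := (S : Set ι).indicator fun i => c - hA.eigenvalues i
  have hf : 0 ≤ f := Set.indicator_nonneg fun i hi => sub_nonneg.mpr (hle i hi)
  have hcf (i : ι) : c ≤ hA.eigenvalues i + f i := by
    by_cases hi : i ∈ S
    · simp [f, hi]
    · simpa [f, hi] using hge i hi
  refine ⟨spectralHom hA f, c, map_nonneg (spectralHom hA) hf,
    algebraMap_le_add_spectralHom hA hcf, ?_⟩
  rw [trace_spectralHom, Finset.sum_indicator_subset _ S.subset_univ, Finset.sum_sub_distrib,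
    Finset.sum_const, nsmul_eq_mul]

end General

section MinEig

variable {n : ℕ} {A B P : Matrix (Fin n) (Fin n) ℂ} {c : ℝ}

lemma algebraMap_minEig_le (hA : A.IsHermitian) :
    algebraMap ℝ (Matrix (Fin n) (Fin n) ℂ) (minEig A) ≤ A := by
  rw [algebraMap_le_iff_le_spectrum (ha := hA.isSelfAdjoint),
    hA.spectrum_real_eq_range_eigenvalues, Set.forall_mem_range, minEig, dif_pos hA]
  exact ciInf_le (Set.finite_range _).bddBelow

lemma le_minEig [NeZero n] (hA : A.IsHermitian)
    (hc : algebraMap ℝ (Matrix (Fin n) (Fin n) ℂ) c ≤ A) : c ≤ minEig A := by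
  rw [algebraMap_le_iff_le_spectrum (ha := hA.isSelfAdjoint),
    hA.spectrum_real_eq_range_eigenvalues, Set.forall_mem_range] at hc
  rw [minEig, dif_pos hA]
  exact le_ciInf hc

lemma rank_mul_minEig_sub_trace_le_trace_mul (hA : A.IsHermitian) (hB : B.PosSemidef)
    (hP : IsStarProjection P) :
    P.rank * minEig A - (B.trace).re ≤ (((A - B) * P).trace).re := by
  have h := rank_mul_sub_trace_le_trace_mul (algebraMap_minEig_le hA) hB.nonneg hP
  simpa using Complex.re_le_re h

end MinEig

section SumSmall

variable {n : ℕ} {Z : Matrix (Fin n) (Fin n) ℂ} {k : ℕ}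

lemma exists_finset_sum_eigenvalues_eq_sumSmall (hZ : Z.IsHermitian) (hkn : k ≤ n) :
    ∃ S : Finset (Fin n), S.card = k ∧ ∑ i ∈ S, hZ.eigenvalues i = sumSmall Z k ∧
      ∀ i ∈ S, ∀ j ∉ S, hZ.eigenvalues i ≤ hZ.eigenvalues j := by
  let σ := Tuple.sort hZ.eigenvalues
  refine ⟨(Finset.univ.filter fun i : Fin n => (i : ℕ) < k).map σ.toEmbedding, ?_, ?_, ?_⟩
  · simp [Fin.card_filter_val_lt, hkn]
  · rw [sumSmall, dif_pos hZ, Finset.sum_map]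
    simp [eigUp, σ]
  · intro i hi j hj
    have hij : σ.symm i ≤ σ.symm j := by
      rw [Finset.mem_map_equiv, Finset.mem_filter_univ] at hi hj
      lia
    simpa [σ] using Tuple.monotone_sort hZ.eigenvalues hij

lemma exists_isStarProjection_trace_mul_eq_sumSmall (hZ : Z.IsHermitian) (hkn : k ≤ n) :
    ∃ P : Matrix (Fin n) (Fin n) ℂ,
      IsStarProjection P ∧ P.rank = k ∧ sumSmall Z k = ((Z * P).trace).re := by
  obtain ⟨S, hcard, hsum, -⟩ := exists_finset_sum_eigenvalues_eq_sumSmall hZ hkn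
  refine ⟨spectralProj hZ S, isStarProjection_spectralProj hZ S, ?_, ?_⟩
  · rw [rank_spectralProj, hcard]
  · rw [trace_mul_spectralProj, ← hsum]
    rfl

lemma exists_sumSmall_le_mul_minEig_sub_trace (hZ : Z.IsHermitian) (hkn : k ≤ n) :
    ∃ A B : Matrix (Fin n) (Fin n) ℂ, A.IsHermitian ∧ B.PosSemidef ∧ Z = A - B ∧
      sumSmall Z k ≤ k * minEig A - (B.trace).re := by
  obtain ⟨S, rfl, hsum, hS⟩ := exists_finset_sum_eigenvalues_eq_sumSmall hZ hkn
  obtain ⟨B, c, hB, hc, htrace⟩ := exists_nonneg_algebraMap_le_add_trace_eq hZ hS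
  have hA : (Z + B).IsHermitian := hZ.add hB.posSemidef.isHermitian
  refine ⟨Z + B, B, hA, hB.posSemidef, (add_sub_cancel_right Z B).symm, ?_⟩
  have hc_minEig : S.card * c ≤ S.card * minEig (Z + B) := by
    rcases S.eq_empty_or_nonempty with rfl | ⟨i, -⟩
    · simp
    · have : NeZero n := ⟨i.pos.ne'⟩
      gcongr
      exact le_minEig hA hc
  have htrace_re : (B.trace).re = S.card * c - ∑ i ∈ S, hZ.eigenvalues i :=
    (congrArg Complex.re htrace).trans (Complex.ofReal_re _)
  linarith

end SumSmall

theorem stmt_17_general {n : ℕ} {Z : Matrix (Fin n) (Fin n) ℂ} (hZ : Z.IsHermitian)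
    {k : ℕ} (hkn : k ≤ n) :
    IsLeast {t : ℝ | ∃ P : Matrix (Fin n) (Fin n) ℂ,
        P.IsHermitian ∧ P * P = P ∧ P.rank = k ∧ t = ((Z * P).trace).re} (sumSmall Z k) ∧
    IsGreatest {t : ℝ | ∃ A B : Matrix (Fin n) (Fin n) ℂ,
        A.IsHermitian ∧ B.PosSemidef ∧ Z = A - B ∧ t = k * minEig A - (B.trace).re}
      (sumSmall Z k) := by
  obtain ⟨P, hP, rfl, hPZ⟩ := exists_isStarProjection_trace_mul_eq_sumSmall hZ hkn
  obtain ⟨A, B, hA, hB, rfl, hAB⟩ := exists_sumSmall_le_mul_minEig_sub_trace hZ hkn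
  have hAB_eq : sumSmall (A - B) P.rank = P.rank * minEig A - (B.trace).re :=
    hAB.antisymm (hPZ ▸ rank_mul_minEig_sub_trace_le_trace_mul hA hB hP)
  refine ⟨⟨⟨P, hP.isSelfAdjoint, hP.isIdempotentElem, rfl, hPZ⟩, ?_⟩,
    ⟨⟨A, B, hA, hB, rfl, hAB_eq⟩, ?_⟩⟩
  · rintro t ⟨Q, hQ, hQQ, hQP, rfl⟩
    rw [hAB_eq, ← hQP]
    exact rank_mul_minEig_sub_trace_le_trace_mul hA hB ⟨hQQ, hQ⟩
  · rintro t ⟨A', B', hA', hB', hZ', rfl⟩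
    rw [hPZ, hZ']
    exact rank_mul_minEig_sub_trace_le_trace_mul hA' hB' hP

theorem stmt_17 {n : ℕ} (Z : Matrix (Fin n) (Fin n) ℂ) (hZ : Z.PosSemidef)
    (k : ℕ) (hk1 : 1 ≤ k) (hkn : k ≤ n) :
    IsLeast {t : ℝ | ∃ P : Matrix (Fin n) (Fin n) ℂ,
        P.IsHermitian ∧ P * P = P ∧ P.rank = k ∧ t = ((Z * P).trace).re} (sumSmall Z k) ∧
    IsGreatest {t : ℝ | ∃ A B : Matrix (Fin n) (Fin n) ℂ,
        A.PosSemidef ∧ B.PosSemidef ∧ Z = A - B ∧ t = k * minEig A - (B.trace).re}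
      (sumSmall Z k) := by
  obtain ⟨hmin, ⟨A, B, -, hB, hZAB, ht⟩, hmax⟩ := stmt_17_general hZ.isHermitian hkn
  exact ⟨hmin, ⟨A, B, sub_eq_iff_eq_add.mp hZAB.symm ▸ hZ.add hB, hB, hZAB, ht⟩,
    fun _ ⟨A, B, hA, hB, h⟩ => hmax ⟨A, B, hA.isHermitian, hB, h⟩⟩
end

section
/- Let A, Z be n×n positive semidefinite complex matrices and assume every diagonal entry of A is greater than or equal to 1. Then the Schur (entrywise) product A ∘ Z supermajorizes Z: for every k = 1,…,n, the sum of the k smallest eigenvalues of A ∘ Z is at least the sum of the k smallest eigenvalues of Z, i.e. ∑_{j=1}^k μ_{n+1-j}(A ∘ Z) ≥ ∑_{j=1}^k μ_{n+1-j}(Z). -/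
open scoped ComplexOrder

/-!
The sum of the `k` smallest eigenvalues of a Hermitian `B` is the minimum of `tr (G B)` over
`0 ≤ G ≤ 1` with `tr G = k` (Ky Fan). If `C` is positive semidefinite with unit diagonal, then
`G ↦ Cᵀ ∘ G` preserves these constraints and is the trace adjoint of `Z ↦ C ∘ Z`; hence passing
from `Z` to `C ∘ Z` cannot decrease the minimum. A general `A` is `D C D` with `C` as above and
`D` the diagonal matrix with entries `√(A i i) ≥ 1`, so that `A ∘ Z = D (C ∘ Z) D`. Finally
`W ↦ D W D` cannot decrease the minimum on positive semidefinite `W`: writing `W = Sᴴ S`, the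
matrix `D W D` has the spectrum of `S D² Sᴴ ≥ S Sᴴ`, and `S Sᴴ` has the spectrum of `W`.
-/

open Matrix
open scoped MatrixOrder

lemma sum_filter_lt_le_sum_mul {R : Type*} [CommRing R] [LinearOrder R] [IsStrictOrderedRing R]
    {n k : ℕ} {f w : Fin n → R} (hf : Monotone f) (hw0 : ∀ i, 0 ≤ w i) (hw1 : ∀ i, w i ≤ 1)
    (hw : ∑ i, w i = k) :
    ∑ i ∈ Finset.univ.filter (fun i : Fin n => (i : ℕ) < k), f i ≤ ∑ i, w i * f i := by
  have hk : k ≤ n := by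
    have h := Finset.sum_le_sum fun i (_ : i ∈ Finset.univ) => hw1 i
    simpa [hw] using h
  obtain rfl | hpos := Nat.eq_zero_or_pos k
  · have hw_zero : ∀ i, w i = 0 := by
      simpa [Finset.sum_eq_zero_iff_of_nonneg fun i _ => hw0 i] using hw
    simp [hw_zero]
  set t := f ⟨k - 1, by omega⟩
  set χ : Fin n → R := fun i => if (i : ℕ) < k then 1 else 0
  have hχ : ∑ i, χ i = k := by
    rw [Finset.sum_boole, Fin.card_filter_val_lt, min_eq_right hk]
  -- As `w` and `χ` have the same total mass, `f` may be shifted by its value `t` at the cutoff.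
  have hterm (i : Fin n) : 0 ≤ (w i - χ i) * (f i - t) := by
    by_cases hi : (i : ℕ) < k
    · have hft : f i ≤ t := hf (Fin.mk_le_mk.2 (by omega) : i ≤ ⟨k - 1, _⟩)
      have hwχ : w i ≤ χ i := by simpa [χ, hi] using hw1 i
      exact mul_nonneg_of_nonpos_of_nonpos (sub_nonpos.2 hwχ) (sub_nonpos.2 hft)
    · have htf : t ≤ f i := hf (Fin.mk_le_mk.2 (by omega) : ⟨k - 1, _⟩ ≤ i)
      have hχw : χ i ≤ w i := by simpa [χ, hi] using hw0 i
      exact mul_nonneg (sub_nonneg.2 hχw) (sub_nonneg.2 htf)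
  have hexpand : ∑ i, (w i - χ i) * (f i - t) = ∑ i, w i * f i - ∑ i, χ i * f i := by
    simp only [mul_sub, sub_mul, Finset.sum_sub_distrib, ← Finset.sum_mul, hw, hχ]
    ring
  calc ∑ i ∈ Finset.univ.filter (fun i : Fin n => (i : ℕ) < k), f i
      = ∑ i, χ i * f i := by simp only [χ, ite_mul, one_mul, zero_mul, Finset.sum_filter]
    _ ≤ ∑ i, w i * f i := sub_nonneg.1 (hexpand ▸ Finset.sum_nonneg fun i _ => hterm i)

section Matrices

variable {𝕜 n : Type*} [RCLike 𝕜] [Fintype n]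

lemma trace_mul_le_trace_mul_of_nonneg_left {G A B : Matrix n n 𝕜} (hG : 0 ≤ G) (hAB : A ≤ B) :
    (G * A).trace ≤ (G * B).trace := by
  classical
  obtain ⟨S, rfl⟩ := CStarAlgebra.nonneg_iff_eq_star_mul_self.1 hG
  have h := (PosSemidef.mul_mul_conjTranspose_same hAB S).trace_nonneg
  rwa [← trace_mul_comm, ← Matrix.mul_assoc, Matrix.mul_sub, trace_sub, sub_nonneg] at h

lemma trace_mul_hadamard {R : Type*} [CommSemiring R] (G C Z : Matrix n n R) :
    (G * (C ⊙ Z)).trace = ((Cᵀ ⊙ G) * Z).trace := by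
  simp only [trace, diag, mul_apply, hadamard_apply, transpose_apply]
  exact Finset.sum_congr rfl fun i _ => Finset.sum_congr rfl fun j _ => by ring

lemma diagonal_mul_mul_diagonal_hadamard [DecidableEq n] {R : Type*} [CommSemiring R] (s t : n → R)
    (C Z : Matrix n n R) :
    (diagonal s * C * diagonal t) ⊙ Z = diagonal s * (C ⊙ Z) * diagonal t := by
  ext i j
  simp only [hadamard_apply, mul_diagonal, diagonal_mul]
  ring

end Matrices

section Correlation

variable {𝕜 n : Type*} [RCLike 𝕜]

/-- Correlation matrices, which here may have complex entries: positive semidefinite with unit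
diagonal. -/
structure IsCorrelation (C : Matrix n n 𝕜) : Prop where
  posSemidef : C.PosSemidef
  diag_eq_one : C.diag = 1

lemma IsCorrelation.transpose {C : Matrix n n 𝕜} (hC : IsCorrelation C) : IsCorrelation Cᵀ :=
  ⟨hC.posSemidef.transpose, hC.diag_eq_one⟩

lemma exists_isCorrelation_eq_diagonal_mul_mul_diagonal [Fintype n] [DecidableEq n]
    {A : Matrix n n 𝕜} (hA : A.PosSemidef) (hA0 : ∀ i, A i i ≠ 0) :
    ∃ (C : Matrix n n 𝕜) (s : n → 𝕜), IsCorrelation C ∧ (∀ i, s i * star (s i) = A i i) ∧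
      A = (diagonal s)ᴴ * C * diagonal s := by
  set s : n → 𝕜 := fun i => (√(RCLike.re (A i i)) : ℝ)
  have hstar (i) : star (s i) = s i := RCLike.conj_ofReal _
  have hs (i) : s i * s i = A i i := by
    rw [← RCLike.ofReal_mul, Real.mul_self_sqrt (RCLike.nonneg_iff.1 hA.diag_nonneg).1,
      hA.isHermitian.coe_re_apply_self]
  have hs0 (i) : s i ≠ 0 := left_ne_zero_of_mul (hs i ▸ hA0 i)
  set E : Matrix n n 𝕜 := diagonal fun i => (s i)⁻¹ with hE
  refine ⟨Eᴴ * A * E, s, ⟨hA.conjTranspose_mul_mul_same E, ?_⟩, fun i => by rw [hstar, hs], ?_⟩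
  · ext i
    simp only [hE, diagonal_conjTranspose, diag_apply, mul_diagonal, diagonal_mul, Pi.star_apply,
      star_inv₀, hstar, ← hs i, Pi.one_apply]
    field_simp [hs0]
  · ext i j
    simp only [hE, diagonal_conjTranspose, mul_diagonal, diagonal_mul, Pi.star_apply, star_inv₀,
      hstar]
    field_simp [hs0]

end Correlation

section Fantope

/-- The Fantope: the matrices `0 ≤ G ≤ 1` of trace `k`, i.e. the convex hull of the rank-`k`
orthogonal projections. It is the feasible set of Ky Fan's variational principle. The inequalities
are in the Loewner order. -/
def fantope (𝕜 n : Type*) [RCLike 𝕜] [Fintype n] [DecidableEq n] (k : ℕ) : Set (Matrix n n 𝕜) :=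
  {G | 0 ≤ G ∧ G ≤ 1 ∧ G.trace = k}

variable {𝕜 n : Type*} [RCLike 𝕜] [Fintype n] [DecidableEq n] {k : ℕ} {G : Matrix n n 𝕜}

lemma diag_mem_Icc_of_mem_fantope (hG : G ∈ fantope 𝕜 n k) (i : n) : G i i ∈ Set.Icc 0 1 :=
  ⟨hG.1.posSemidef.diag_nonneg, by simpa using (le_iff.1 hG.2.1).diag_nonneg (i := i)⟩

lemma diagonal_mem_fantope {d : n → 𝕜} (hd0 : 0 ≤ d) (hd1 : d ≤ 1) (hd : ∑ i, d i = k) :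
    diagonal d ∈ fantope 𝕜 n k := by
  refine ⟨(PosSemidef.diagonal hd0).nonneg, ?_, (trace_diagonal d).trans hd⟩
  rw [le_iff, ← diagonal_one, diagonal_sub]
  exact .diagonal (sub_nonneg.2 hd1)

lemma star_mul_mul_mem_fantope (hG : G ∈ fantope 𝕜 n k) (U : unitaryGroup n 𝕜) :
    star (U : Matrix n n 𝕜) * G * U ∈ fantope 𝕜 n k := by
  refine ⟨star_left_conjugate_nonneg hG.1 _, ?_, ?_⟩
  · simpa using star_left_conjugate_le_conjugate hG.2.1 (U : Matrix n n 𝕜)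
  · rw [trace_mul_comm, ← Matrix.mul_assoc, Unitary.mul_star_self_of_mem U.2, Matrix.one_mul,
      hG.2.2]

lemma IsCorrelation.hadamard_mem_fantope {C : Matrix n n 𝕜} (hC : IsCorrelation C)
    (hG : G ∈ fantope 𝕜 n k) : C ⊙ G ∈ fantope 𝕜 n k := by
  refine ⟨(hC.posSemidef.hadamard hG.1.posSemidef).nonneg, ?_, ?_⟩
  · have hsub : 1 - C ⊙ G = C ⊙ (1 - G) := by
      conv_lhs => rw [← hadamard_one_eq_one_iff.2 hC.diag_eq_one]
      ext i j
      simp only [Matrix.sub_apply, hadamard_apply, mul_sub]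
    rw [le_iff, hsub]
    exact hC.posSemidef.hadamard hG.2.1
  · have hdiag (i) : C i i = 1 := congrFun hC.diag_eq_one i
    simpa [trace, hdiag] using hG.2.2

end Fantope

section KyFan

lemma trace_mul_eq_sum_eigenvalues {𝕜 n : Type*} [RCLike 𝕜] [Fintype n] [DecidableEq n]
    {B : Matrix n n 𝕜} (hB : B.IsHermitian) (G : Matrix n n 𝕜) :
    (G * B).trace = ∑ i, (star (hB.eigenvectorUnitary : Matrix n n 𝕜) * G *
      hB.eigenvectorUnitary) i i * hB.eigenvalues i := by
  conv_lhs => rw [hB.spectral_theorem, Unitary.conjStarAlgAut_apply]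
  rw [← Matrix.mul_assoc, ← Matrix.mul_assoc, trace_mul_comm, ← Matrix.mul_assoc,
    ← Matrix.mul_assoc]
  simp [trace, mul_diagonal]

variable {n k : ℕ} {B : Matrix (Fin n) (Fin n) ℂ}

lemma monotone_eigUp_s18 (hB : B.IsHermitian) : Monotone (eigUp hB) :=
  Tuple.monotone_sort hB.eigenvalues

lemma sumSmall_le_re_trace_mul (hB : B.IsHermitian) {G : Matrix (Fin n) (Fin n) ℂ}
    (hG : G ∈ fantope ℂ (Fin n) k) : sumSmall B k ≤ (G * B).trace.re := by
  set W := star (hB.eigenvectorUnitary : Matrix (Fin n) (Fin n) ℂ) * G * hB.eigenvectorUnitary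
  have hW : W ∈ fantope ℂ (Fin n) k := star_mul_mul_mem_fantope hG _
  set σ := Tuple.sort hB.eigenvalues
  have hsum : ∑ i, (W (σ i) (σ i)).re = k := by
    rw [Equiv.sum_comp σ fun i => (W i i).re, ← Complex.re_sum]
    exact congrArg Complex.re hW.2.2
  calc sumSmall B k
      = ∑ i ∈ Finset.univ.filter (fun i : Fin n => (i : ℕ) < k), eigUp hB i := dif_pos hB
    _ ≤ ∑ i, (W (σ i) (σ i)).re * eigUp hB i :=
        sum_filter_lt_le_sum_mul (monotone_eigUp_s18 hB)
          (fun i => (Complex.le_def.1 (diag_mem_Icc_of_mem_fantope hW (σ i)).1).1)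
          (fun i => (Complex.le_def.1 (diag_mem_Icc_of_mem_fantope hW (σ i)).2).1) hsum
    _ = ∑ i, (W i i).re * hB.eigenvalues i :=
        Equiv.sum_comp σ fun i => (W i i).re * hB.eigenvalues i
    _ = (G * B).trace.re := by simp [trace_mul_eq_sum_eigenvalues hB, W]

lemma exists_mem_fantope_re_trace_mul_eq_sumSmall (hB : B.IsHermitian) (hk : k ≤ n) :
    ∃ G ∈ fantope ℂ (Fin n) k, (G * B).trace.re = sumSmall B k := by
  set U : Matrix (Fin n) (Fin n) ℂ := hB.eigenvectorUnitary.1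
  set σ := Tuple.sort hB.eigenvalues
  set d : Fin n → ℂ := fun i => if (σ.symm i : ℕ) < k then 1 else 0
  have hd : ∑ i, d i = k := by
    rw [← Equiv.sum_comp σ]
    simp [d, Finset.sum_boole, Fin.card_filter_val_lt, hk]
  have hd_mem : diagonal d ∈ fantope ℂ (Fin n) k := by
    refine diagonal_mem_fantope (fun i => ?_) (fun i => ?_) hd <;>
      by_cases hi : (σ.symm i : ℕ) < k <;> simp [d, hi]
  have hUU : star U * U = 1 := Unitary.coe_star_mul_self hB.eigenvectorUnitary
  have hconj : star U * (U * diagonal d * star U) * U = diagonal d := by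
    calc star U * (U * diagonal d * star U) * U = star U * U * diagonal d * (star U * U) := by
          simp only [Matrix.mul_assoc]
      _ = diagonal d := by rw [hUU, Matrix.one_mul, Matrix.mul_one]
  refine ⟨U * diagonal d * star U, ?_, ?_⟩
  · simpa only [Unitary.coe_star, star_star] using
      star_mul_mul_mem_fantope hd_mem (star hB.eigenvectorUnitary)
  · rw [trace_mul_eq_sum_eigenvalues hB, hconj, sumSmall, dif_pos hB, Finset.sum_filter,
      ← Equiv.sum_comp σ, Complex.re_sum]
    exact Finset.sum_congr rfl fun i _ => by simp [d, eigUp, σ, ite_mul, apply_ite Complex.re]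

end KyFan

section SumSmall

variable {n k : ℕ}

lemma sumSmall_mono {A B : Matrix (Fin n) (Fin n) ℂ} (hA : A.IsHermitian) (hB : B.IsHermitian)
    (hAB : A ≤ B) (hk : k ≤ n) : sumSmall A k ≤ sumSmall B k := by
  obtain ⟨G, hG, hGB⟩ := exists_mem_fantope_re_trace_mul_eq_sumSmall hB hk
  calc sumSmall A k ≤ (G * A).trace.re := sumSmall_le_re_trace_mul hA hG
    _ ≤ (G * B).trace.re :=
        (Complex.le_def.1 (trace_mul_le_trace_mul_of_nonneg_left hG.1 hAB)).1
    _ = sumSmall B k := hGB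

lemma sumSmall_conjTranspose_mul_self (X : Matrix (Fin n) (Fin n) ℂ) (k : ℕ) :
    sumSmall (Xᴴ * X) k = sumSmall (X * Xᴴ) k := by
  have h := isHermitian_conjTranspose_mul_self X
  have h' := isHermitian_mul_conjTranspose_self X
  have heig : h.eigenvalues = h'.eigenvalues :=
    (h.eigenvalues_eq_eigenvalues_iff h').2 (charpoly_mul_comm _ _)
  simp only [sumSmall, dif_pos h, dif_pos h', eigUp, heig]

lemma sumSmall_le_sumSmall_conjTranspose_mul_mul {W D : Matrix (Fin n) (Fin n) ℂ}
    (hW : W.PosSemidef) (hD : 1 ≤ D * Dᴴ) (hk : k ≤ n) :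
    sumSmall W k ≤ sumSmall (Dᴴ * W * D) k := by
  obtain ⟨S, rfl⟩ := CStarAlgebra.nonneg_iff_eq_star_mul_self.1 hW.nonneg
  have hle : S * Sᴴ ≤ S * D * (S * D)ᴴ := by
    simpa [star_eq_conjTranspose, conjTranspose_mul, Matrix.mul_assoc] using
      star_right_conjugate_le_conjugate hD S
  calc sumSmall (Sᴴ * S) k = sumSmall (S * Sᴴ) k := sumSmall_conjTranspose_mul_self S k
    _ ≤ sumSmall (S * D * (S * D)ᴴ) k :=
        sumSmall_mono (isHermitian_mul_conjTranspose_self _)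
          (isHermitian_mul_conjTranspose_self _) hle hk
    _ = sumSmall ((S * D)ᴴ * (S * D)) k := (sumSmall_conjTranspose_mul_self (S * D) k).symm
    _ = sumSmall (Dᴴ * (Sᴴ * S) * D) k := by simp only [conjTranspose_mul, Matrix.mul_assoc]

lemma IsCorrelation.sumSmall_le_sumSmall_hadamard {C Z : Matrix (Fin n) (Fin n) ℂ}
    (hC : IsCorrelation C) (hZ : Z.IsHermitian) (hk : k ≤ n) :
    sumSmall Z k ≤ sumSmall (C ⊙ Z) k := by
  obtain ⟨G, hG, hGCZ⟩ :=
    exists_mem_fantope_re_trace_mul_eq_sumSmall (hC.posSemidef.isHermitian.hadamard hZ) hk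
  rw [← hGCZ, trace_mul_hadamard]
  exact sumSmall_le_re_trace_mul hZ (hC.transpose.hadamard_mem_fantope hG)

end SumSmall

theorem stmt_18 {n : ℕ} (A Z : Matrix (Fin n) (Fin n) ℂ) (hA : A.PosSemidef) (hZ : Z.PosSemidef)
    (hdiag : ∀ i : Fin n, (1 : ℂ) ≤ A i i) :
    ∀ k : ℕ, 1 ≤ k → k ≤ n → sumSmall Z k ≤ sumSmall (Matrix.hadamard A Z) k := by
  intro k _ hk
  obtain ⟨C, s, hC, hs, hACs⟩ := exists_isCorrelation_eq_diagonal_mul_mul_diagonal hA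
    fun i => (zero_lt_one.trans_le (hdiag i)).ne'
  have hD : 1 ≤ diagonal s * (diagonal s)ᴴ := by
    rw [diagonal_conjTranspose, diagonal_mul_diagonal, le_iff, ← diagonal_one, diagonal_sub]
    exact .diagonal fun i => sub_nonneg.2 ((hdiag i).trans_eq (hs i).symm)
  calc sumSmall Z k
      ≤ sumSmall (C ⊙ Z) k := hC.sumSmall_le_sumSmall_hadamard hZ.isHermitian hk
    _ ≤ sumSmall ((diagonal s)ᴴ * (C ⊙ Z) * diagonal s) k :=
        sumSmall_le_sumSmall_conjTranspose_mul_mul (hC.posSemidef.hadamard hZ) hD hk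
    _ = sumSmall (A ⊙ Z) k := by
        rw [hACs, diagonal_conjTranspose, diagonal_mul_mul_diagonal_hadamard]
end
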